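/- Let A ∈ {0,1}^{n×n} be a random symmetric adjacency matrix with zero diagonal such that A_{uv} ~ Bernoulli(P_{uv}) independently for all u > v, where P ∈ [0,1]^{n×n} is symmetric, and set p_max = max over u ≥ v of P_{uv}. There exist universal constants C > 0 (sufficiently large) and C' > 0 such that for any τ > C·(1 + n·p_max), with probability at least 1 − e^{−C'·n}, the number of nodes with degree at least τ satisfies #{u ∈ [n] : d_u ≥ τ} ≤ n/τ. -/

import Mathlib

open scoped BigOperators
open Filter

namespace SBM

noncomputable section

/-- Adjacency matrices of graphs on `n` nodes. -/
abbrev Adj (n : ℕ) := Fin n → Fin n → Bool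

/-- 0/1 real value of an entry of the adjacency matrix. -/
def aVal {n : ℕ} (A : Adj n) (u v : Fin n) : ℝ := if A u v then 1 else 0

/-- Probability weight of one adjacency matrix under the SBM with edge
probability matrix `P`: the entries above the diagonal are independent
Bernoulli, the matrix is symmetric with zero diagonal. -/
def weight {n : ℕ} (P : Matrix (Fin n) (Fin n) ℝ) (A : Adj n) : ℝ :=
  if (∀ u, A u u = false) ∧ (∀ u v, A u v = A v u) then
    ∏ u : Fin n, ∏ v : Fin n,
      if u < v then (if A u v then P u v else 1 - P u v) else 1
  else 0

/-- Probability of a set of adjacency matrices under the SBM with edge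
probability matrix `P`. -/
def prob {n : ℕ} (P : Matrix (Fin n) (Fin n) ℝ) (S : Set (Adj n)) : ℝ :=
  ∑ A : Adj n, S.indicator (weight P) A

/-- The edge probability matrix `P u v = B (σ u) (σ v)`. -/
def pMat {n k : ℕ} (B : Matrix (Fin k) (Fin k) ℝ) (σ : Fin n → Fin k) :
    Matrix (Fin n) (Fin n) ℝ := fun u v => B (σ u) (σ v)

/-- Size of the `i`-th community of a label assignment. -/
def comSize {n k : ℕ} (σ : Fin n → Fin k) (i : Fin k) : ℝ :=
  ((Finset.univ.filter fun u => σ u = i).card : ℝ)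

/-- Hamming loss `ℓ0`. -/
def l0 {n k : ℕ} (σ1 σ2 : Fin n → Fin k) : ℝ :=
  ((Finset.univ.filter fun u => σ1 u ≠ σ2 u).card : ℝ) / n

/-- Misclassification proportion: minimum of `ℓ0` over relabelings. -/
def misclass {n k : ℕ} (σh σ : Fin n → Fin k) : ℝ :=
  ⨅ π : Equiv.Perm (Fin k), l0 σh (fun u => π (σ u))

/-- Euclidean norm of a vector. -/
def sqnorm {n : ℕ} (x : Fin n → ℝ) : ℝ := Real.sqrt (∑ i, x i ^ 2)

/-- Operator (spectral) norm of a square matrix. -/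
def opNorm {n : ℕ} (M : Matrix (Fin n) (Fin n) ℝ) : ℝ :=
  sSup { t : ℝ | ∃ x : Fin n → ℝ, sqnorm x = 1 ∧ t = sqnorm (M.mulVec x) }

/-- The `k`-th largest singular value of a square matrix, via the
Courant–Fischer max-min characterization. -/
def kthSingular {n : ℕ} (M : Matrix (Fin n) (Fin n) ℝ) (k : ℕ) : ℝ :=
  sSup { t : ℝ | 0 ≤ t ∧ ∃ V : Submodule ℝ (Fin n → ℝ),
    Module.finrank ℝ V = k ∧ ∀ x ∈ V, t * sqnorm x ≤ sqnorm (M.mulVec x) }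

/-- The Rényi divergence of order 1/2, `I*`. -/
def renyiHalf (n : ℕ) (a b : ℝ) : ℝ :=
  -2 * Real.log (Real.sqrt ((a / n) * (b / n)) +
    Real.sqrt ((1 - a / n) * (1 - b / n)))

/-- The balanced parameter space `Θ₀(n,k,a,b,β)`. -/
def Theta0 (n k : ℕ) (a b β : ℝ) :
    Set (Matrix (Fin k) (Fin k) ℝ × (Fin n → Fin k)) :=
  { p | (∀ i, (n : ℝ) / (β * k) - 1 ≤ comSize p.2 i ∧
          comSize p.2 i ≤ β * n / k + 1) ∧
        (∀ i, p.1 i i = a / n) ∧ ∀ i j, i ≠ j → p.1 i j = b / n }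

/-- Average of the off-diagonal entries of a `k × k` matrix. -/
def offDiagAvg {k : ℕ} (B : Matrix (Fin k) (Fin k) ℝ) : ℝ :=
  (1 / ((k : ℝ) * ((k : ℝ) - 1))) *
    ∑ i : Fin k, ∑ j : Fin k, if i ≠ j then B i j else 0

/-- The general parameter space `Θ(n,k,a,b,λ,β;α)`. -/
def ThetaGen (n k : ℕ) (a b lam β α : ℝ) :
    Set (Matrix (Fin k) (Fin k) ℝ × (Fin n → Fin k)) :=
  { p | (∀ i, (n : ℝ) / (β * k) - 1 ≤ comSize p.2 i ∧
          comSize p.2 i ≤ β * n / k + 1) ∧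
        (∀ i j, p.1 i j = p.1 j i) ∧
        (∀ i j, 0 ≤ p.1 i j ∧ p.1 i j ≤ 1) ∧
        b / (α * n) ≤ offDiagAvg p.1 ∧
        (∀ i j, i ≠ j → p.1 i j ≤ b / n) ∧
        (∃ i j, i ≠ j ∧ p.1 i j = b / n) ∧
        (∀ i, a / n ≤ p.1 i i) ∧ (∃ i, p.1 i i = a / n) ∧
        (∀ i, p.1 i i ≤ α * a / n) ∧
        lam ≤ kthSingular (pMat p.1 p.2) k }

/-- The estimated community `C̃ᵢᵘ` (node `u` itself is excluded). -/
def cluster {n k : ℕ} (u : Fin n) (s : Fin n → Fin k) (i : Fin k) :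
    Finset (Fin n) :=
  Finset.univ.filter fun v => v ≠ u ∧ s v = i

/-- Number of edges within a set of nodes. -/
def edgesWithin {n : ℕ} (A : Adj n) (C : Finset (Fin n)) : ℝ :=
  (∑ v ∈ C, ∑ w ∈ C, aVal A v w) / 2

/-- Number of edges between two disjoint sets of nodes. -/
def edgesBetween {n : ℕ} (A : Adj n) (C D : Finset (Fin n)) : ℝ :=
  ∑ v ∈ C, ∑ w ∈ D, aVal A v w

/-- The connectivity estimates `B̂ᵢⱼᵘ` of Algorithm 1, based on the initial
assignment `s = σ⁰ᵤ`. -/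
def hatB {n k : ℕ} (A : Adj n) (u : Fin n) (s : Fin n → Fin k) (i j : Fin k) :
    ℝ :=
  if i = j then
    edgesWithin A (cluster u s i) /
      (((cluster u s i).card : ℝ) * (((cluster u s i).card : ℝ) - 1) / 2)
  else
    edgesBetween A (cluster u s i) (cluster u s j) /
      (((cluster u s i).card : ℝ) * ((cluster u s j).card : ℝ))

/-- `â_u = n · minᵢ B̂ᵢᵢᵘ`. -/
def hata {n k : ℕ} (A : Adj n) (u : Fin n) (s : Fin n → Fin k) : ℝ :=
  n * ⨅ i : Fin k, hatB A u s i i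

/-- `b̂_u = n · maxᵢ≠ⱼ B̂ᵢⱼᵘ`. -/
def hatb {n k : ℕ} (A : Adj n) (u : Fin n) (s : Fin n → Fin k) : ℝ :=
  n * sSup { x : ℝ | ∃ i j : Fin k, i ≠ j ∧ x = hatB A u s i j }

/-- `t = ½ log (â (1 − b̂/n) / (b̂ (1 − â/n)))`. -/
def tStat (n : ℕ) (ha hb : ℝ) : ℝ :=
  Real.log (ha * (1 - hb / n) / (hb * (1 - ha / n))) / 2

/-- `ρ = −(1/(2t)) log (((â/n)e^{−t} + 1 − â/n)/((b̂/n)e^{t} + 1 − b̂/n))`. -/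
def rhoStat (n : ℕ) (ha hb t : ℝ) : ℝ :=
  -(Real.log (((ha / n) * Real.exp (-t) + 1 - ha / n) /
      ((hb / n) * Real.exp t + 1 - hb / n))) / (2 * t)

/-- Penalized vote of node `u` for label `l`. -/
def vote {n k : ℕ} (A : Adj n) (u : Fin n) (s : Fin n → Fin k) (ρ : ℝ)
    (l : Fin k) : ℝ :=
  (∑ v ∈ cluster u s l, aVal A u v) - ρ * ((cluster u s l).card : ℝ)

/-- `lbl` maximizes the penalized vote of node `u`. -/
def VoteMax {n k : ℕ} (A : Adj n) (u : Fin n) (s : Fin n → Fin k) (ρ : ℝ)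
    (lbl : Fin k) : Prop :=
  ∀ l : Fin k, vote A u s ρ l ≤ vote A u s ρ lbl

/-- `|{v : σU_{u1}(v) = l} ∩ {v : σU_u(v) = σU_u(u)}|`. -/
def consensusCount {n k : ℕ} (σU : Fin n → Fin n → Fin k) (u1 u : Fin n)
    (l : Fin k) : ℕ :=
  (Finset.univ.filter fun v => σU u1 v = l ∧ σU u v = σU u u).card

/-- Specification of the refinement-plus-consensus scheme of Algorithm 1, with
an arbitrary family of penalties `ρ`.  `σ0 u` is the initial assignment
`σ⁰ᵤ`, `σU u` is the refined assignment `σ̂ᵤ`, `σhat` is the final output. -/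
def RefineSpec {n k : ℕ} (A : Adj n) (σ0 σU : Fin n → Fin n → Fin k)
    (ρ : Fin n → ℝ) (σhat : Fin n → Fin k) : Prop :=
  (∀ u v, v ≠ u → σU u v = σ0 u v) ∧
  (∀ u, VoteMax A u (σ0 u) (ρ u) (σU u u)) ∧
  ∀ hn : 0 < n,
    σhat ⟨0, hn⟩ = σU ⟨0, hn⟩ ⟨0, hn⟩ ∧
    ∀ u, u ≠ ⟨0, hn⟩ →
      ∀ l : Fin k, consensusCount σU ⟨0, hn⟩ u l ≤
        consensusCount σU ⟨0, hn⟩ u (σhat u)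

/-- Algorithm 1 with the standard data-driven penalties. -/
def AlgorithmOne {n k : ℕ} (A : Adj n) (σ0 σU : Fin n → Fin n → Fin k)
    (σhat : Fin n → Fin k) : Prop :=
  RefineSpec A σ0 σU
    (fun u => rhoStat n (hata A u (σ0 u)) (hatb A u (σ0 u))
      (tStat n (hata A u (σ0 u)) (hatb A u (σ0 u)))) σhat

/-- Algorithm 1 with the truncated `t_u` (truncation level `log (2/ε0)`). -/
def AlgorithmOneTrunc (ε0 : ℝ) {n k : ℕ} (A : Adj n)
    (σ0 σU : Fin n → Fin n → Fin k) (σhat : Fin n → Fin k) : Prop :=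
  RefineSpec A σ0 σU
    (fun u => rhoStat n (hata A u (σ0 u)) (hatb A u (σ0 u))
      (min (tStat n (hata A u (σ0 u)) (hatb A u (σ0 u)))
        (Real.log (2 / ε0)))) σhat

/-- Algorithm 1 with known `a` and `b`. -/
def AlgorithmOneKnown (a b : ℝ) {n k : ℕ} (A : Adj n)
    (σ0 σU : Fin n → Fin n → Fin k) (σhat : Fin n → Fin k) : Prop :=
  RefineSpec A σ0 σU (fun _ => rhoStat n a b (tStat n a b)) σhat

/-- Algorithm 1 with known `a`, `b` and truncated `t_u`. -/
def AlgorithmOneKnownTrunc (a b ε0 : ℝ) {n k : ℕ} (A : Adj n)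
    (σ0 σU : Fin n → Fin n → Fin k) (σhat : Fin n → Fin k) : Prop :=
  RefineSpec A σ0 σU
    (fun _ => rhoStat n a b (min (tStat n a b) (Real.log (2 / ε0)))) σhat

/-- The initializer `σ0 A u` (that is, `σ⁰ᵤ`) only uses the data `A₋ᵤ`. -/
def LocalInit {n k : ℕ} (σ0 : Adj n → Fin n → Fin n → Fin k) : Prop :=
  ∀ (A A' : Adj n) (u : Fin n),
    (∀ v w, v ≠ u → w ≠ u → A v w = A' v w) → σ0 A u = σ0 A' u

/-- Condition 1: the initializer is, with probability at least
`1 − C0 n^{−(1+δ)}`, within misclassification proportion `γ` of the truth,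
uniformly over the parameter space and the left-out node. -/
def Condition1 {n k : ℕ}
    (Θ : Set (Matrix (Fin k) (Fin k) ℝ × (Fin n → Fin k)))
    (σ0 : Adj n → Fin n → Fin n → Fin k) (C0 δ γ : ℝ) : Prop :=
  ∀ p ∈ Θ, ∀ u : Fin n,
    1 - C0 * (n : ℝ) ^ (-(1 + δ)) ≤
      prob (pMat p.1 p.2) { A | misclass p.2 (σ0 A u) ≤ γ }

/-- Degree of a node. -/
def degree {n : ℕ} (A : Adj n) (u : Fin n) : ℝ := ∑ v, aVal A u v

/-- Average degree `d̄`. -/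
def avgDeg {n : ℕ} (A : Adj n) : ℝ := (∑ u, degree A u) / n

/-- Trimming operator `T_τ`: zero out rows/columns of high-degree nodes. -/
def trim {n : ℕ} (A : Adj n) (τ : ℝ) : Matrix (Fin n) (Fin n) ℝ :=
  fun u v => if τ ≤ degree A u ∨ τ ≤ degree A v then 0 else aVal A u v

/-- Regularized adjacency matrix `A_τ = A + (τ/n)·11ᵀ`. -/
def addReg {n : ℕ} (A : Adj n) (τ : ℝ) : Matrix (Fin n) (Fin n) ℝ :=
  fun u v => aVal A u v + τ / n

/-- Normalized Laplacian `L(M)_{uv} = M_{uv}/√(r_u r_v)`. -/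
def lap {n : ℕ} (M : Matrix (Fin n) (Fin n) ℝ) : Matrix (Fin n) (Fin n) ℝ :=
  fun u v => M u v / Real.sqrt ((∑ w, M u w) * (∑ w, M v w))

/-- `U` is a matrix whose columns are orthonormal eigenvectors of `M`
corresponding to the `k` leading (largest in absolute value) eigenvalues. -/
def LeadingEigenvectors {n k : ℕ} (M : Matrix (Fin n) (Fin n) ℝ)
    (U : Matrix (Fin n) (Fin k) ℝ) : Prop :=
  ∃ μ : Fin k → ℝ,
    (∀ i j : Fin k, (∑ u, U u i * U u j) = if i = j then (1 : ℝ) else 0) ∧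
    (∀ j : Fin k, M.mulVec (fun u => U u j) = fun u => μ j * U u j) ∧
    ∀ (x : Fin n → ℝ) (c : ℝ), M.mulVec x = (fun u => c * x u) →
      (∀ j, (∑ u, x u * U u j) = 0) → x ≠ 0 → ∀ j, |c| ≤ |μ j|

/-- Distance between two rows of `U`. -/
def rowDist {n k : ℕ} (U : Matrix (Fin n) (Fin k) ℝ) (v w : Fin n) : ℝ :=
  Real.sqrt (∑ j, (U v j - U w j) ^ 2)

/-- Number of points of `S` within distance `r` of `v`. -/
def ballCount {n k : ℕ} (U : Matrix (Fin n) (Fin k) ℝ) (r : ℝ)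
    (S : Finset (Fin n)) (v : Fin n) : ℕ :=
  (S.filter fun w => rowDist U w v < r).card

/-- Specification of the greedy clustering scheme (Algorithm 2) with critical
radius `r`, applied to the rows of `U`. -/
def GreedyCluster {n k : ℕ} (U : Matrix (Fin n) (Fin k) ℝ) (r : ℝ)
    (σhat : Fin n → Fin k) : Prop :=
  ∃ (S : ℕ → Finset (Fin n)) (t : Fin k → Fin n) (Ch : Fin k → Finset (Fin n)),
    S 0 = Finset.univ ∧
    (∀ i : Fin k,
      ((S i.val).Nonempty → t i ∈ S i.val ∧
        ∀ v ∈ S i.val,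
          ballCount U r (S i.val) v ≤ ballCount U r (S i.val) (t i)) ∧
      Ch i = (S i.val).filter (fun v => rowDist U v (t i) < r) ∧
      S (i.val + 1) = S i.val \ Ch i) ∧
    (∀ i : Fin k, ∀ u ∈ Ch i, σhat u = i) ∧
    ∀ u ∈ S k, ∀ j : Fin k,
      (∑ v ∈ Ch (σhat u), rowDist U u v) / ((Ch (σhat u)).card : ℝ) ≤
        (∑ v ∈ Ch j, rowDist U u v) / ((Ch j).card : ℝ)

/-- `σhat` is a possible output of `USC(τ)` (with tuning constant `μ`). -/
def USCOutput {n k : ℕ} (A : Adj n) (τ μ : ℝ) (σhat : Fin n → Fin k) : Prop :=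
  ∃ U : Matrix (Fin n) (Fin k) ℝ,
    LeadingEigenvectors (trim A τ) U ∧
    GreedyCluster U (μ * Real.sqrt ((k : ℝ) / n)) σhat

/-- `σhat` is a possible output of `NSC(τ)` (with tuning constant `μ`). -/
def NSCOutput {n k : ℕ} (A : Adj n) (τ μ : ℝ) (σhat : Fin n → Fin k) : Prop :=
  ∃ U : Matrix (Fin n) (Fin k) ℝ,
    LeadingEigenvectors (lap (addReg A τ)) U ∧
    GreedyCluster U (μ * Real.sqrt ((k : ℝ) / n)) σhat

/-- The initializer `σ0 A u` is obtained by applying `USC(Cτ · d̄)` to the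
leave-one-out matrix `A₋ᵤ` (identified with a graph on `n − 1` nodes via an
injection `e` avoiding `u`). -/
def USCInitDeg {n k : ℕ} (Cτ μ : ℝ) (σ0 : Adj n → Fin n → Fin n → Fin k) :
    Prop :=
  ∀ (A : Adj n) (u : Fin n), ∃ (m : ℕ) (e : Fin m → Fin n) (s' : Fin m → Fin k),
    m + 1 = n ∧ Function.Injective e ∧ (∀ w, e w ≠ u) ∧
    USCOutput (fun v w => A (e v) (e w))
      (Cτ * avgDeg (fun v w => A (e v) (e w))) μ s' ∧
    ∀ w, σ0 A u (e w) = s' w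

/-- The initializer `σ0 A u` is obtained by applying `NSC(Cτ · d̄)` to `A₋ᵤ`. -/
def NSCInitDeg {n k : ℕ} (Cτ μ : ℝ) (σ0 : Adj n → Fin n → Fin n → Fin k) :
    Prop :=
  ∀ (A : Adj n) (u : Fin n), ∃ (m : ℕ) (e : Fin m → Fin n) (s' : Fin m → Fin k),
    m + 1 = n ∧ Function.Injective e ∧ (∀ w, e w ≠ u) ∧
    NSCOutput (fun v w => A (e v) (e w))
      (Cτ * avgDeg (fun v w => A (e v) (e w))) μ s' ∧
    ∀ w, σ0 A u (e w) = s' w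

/-- The initializer `σ0 A u` is obtained by applying `USC(τ)` (with a fixed
regularization level `τ`) to `A₋ᵤ`. -/
def USCInitTau {n k : ℕ} (τ μ : ℝ) (σ0 : Adj n → Fin n → Fin n → Fin k) :
    Prop :=
  ∀ (A : Adj n) (u : Fin n), ∃ (m : ℕ) (e : Fin m → Fin n) (s' : Fin m → Fin k),
    m + 1 = n ∧ Function.Injective e ∧ (∀ w, e w ≠ u) ∧
    USCOutput (fun v w => A (e v) (e w)) τ μ s' ∧
    ∀ w, σ0 A u (e w) = s' w

/-- The initializer `σ0 A u` is obtained by applying `NSC(τ)` (with a fixed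
regularization level `τ`) to `A₋ᵤ`. -/
def NSCInitTau {n k : ℕ} (τ μ : ℝ) (σ0 : Adj n → Fin n → Fin n → Fin k) :
    Prop :=
  ∀ (A : Adj n) (u : Fin n), ∃ (m : ℕ) (e : Fin m → Fin n) (s' : Fin m → Fin k),
    m + 1 = n ∧ Function.Injective e ∧ (∀ w, e w ≠ u) ∧
    NSCOutput (fun v w => A (e v) (e w)) τ μ s' ∧
    ∀ w, σ0 A u (e w) = s' w

/-- The minimax-rate threshold `exp(−(1−coef)·n·I*/2)` for `k = 2` and
`exp(−(1−coef)·n·I*/(βk))` for `k ≥ 3`. -/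
def rate (β : ℝ) (n k : ℕ) (a b coef : ℝ) : ℝ :=
  if k = 2 then Real.exp (-((1 - coef) * ((n : ℝ) * renyiHalf n a b)) / 2)
  else Real.exp (-((1 - coef) * ((n : ℝ) * renyiHalf n a b)) / (β * k))

/-- `sup_{(B,σ)∈Θ₀} P{ℓ(σ,σ̂) ≥ rate} → 0` as `n → ∞`. -/
def SupSmall0 (β : ℝ) (k : ℕ → ℕ) (a b coef : ℕ → ℝ)
    (σhat : ∀ n, Adj n → Fin n → Fin (k n)) : Prop :=
  ∀ ε' : ℝ, 0 < ε' → ∀ᶠ n in atTop,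
    ∀ p ∈ Theta0 n (k n) (a n) (b n) β,
      prob (pMat p.1 p.2)
        { A | rate β n (k n) (a n) (b n) (coef n) ≤ misclass (σhat n A) p.2 }
        ≤ ε'

/-- `sup_{(B,σ)∈Θ} P{ℓ(σ,σ̂) ≥ rate} → 0` as `n → ∞`. -/
def SupSmallGen (β α : ℝ) (k : ℕ → ℕ) (a b lam coef : ℕ → ℝ)
    (σhat : ∀ n, Adj n → Fin n → Fin (k n)) : Prop :=
  ∀ ε' : ℝ, 0 < ε' → ∀ᶠ n in atTop,
    ∀ p ∈ ThetaGen n (k n) (a n) (b n) (lam n) β α,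
      prob (pMat p.1 p.2)
        { A | rate β n (k n) (a n) (b n) (coef n) ≤ misclass (σhat n A) p.2 }
        ≤ ε'

/-- The running assumption `0 < b < a ≤ (1−ε) n`. -/
def Baseline (ε : ℝ) (n : ℕ) (a b : ℝ) : Prop :=
  0 < b ∧ b < a ∧ a ≤ (1 - ε) * n

/-- `a ≍ b`. -/
def Comparable (a b : ℕ → ℝ) : Prop :=
  ∃ c1 c2 : ℝ, 0 < c1 ∧ ∀ n, c1 * b n ≤ a n ∧ a n ≤ c2 * b n

/-- The constant `C_ε`. -/
def Ceps (ε : ℝ) : ℝ := (10 / 3) * ((2 - ε) / ((ε / 2) * Real.log (2 / ε)))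

/-- The constant `c_ε`. -/
def ceps (ε : ℝ) : ℝ := min (1 / (10 * Ceps ε)) (ε / (2 - ε))

/-- The maximal entry `p_max` of a matrix. -/
def pmax {n : ℕ} (P : Matrix (Fin n) (Fin n) ℝ) : ℝ :=
  sSup { x : ℝ | ∃ u v, x = P u v }

/-- The matrix agreeing with `M` on `J × J` and zero elsewhere. -/
def restrictM {n : ℕ} (M : Matrix (Fin n) (Fin n) ℝ) (J : Finset (Fin n)) :
    Matrix (Fin n) (Fin n) ℝ :=
  fun u v => if u ∈ J ∧ v ∈ J then M u v else 0

/-- The real-valued adjacency matrix. -/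
def adjMat {n : ℕ} (A : Adj n) : Matrix (Fin n) (Fin n) ℝ := fun u v => aVal A u v

end

end SBM

namespace SBM

open Filter

/-- A sum over strictly upper triangular Boolean matrices factorizes; transported to symmetric
matrices with zero diagonal, this is the independence of the entries above the diagonal. -/
theorem sum_symm_prod {n : ℕ} (g : Fin n → Fin n → Bool → ℝ) :
    (∑ A : Adj n, if (∀ u, A u u = false) ∧ (∀ u v, A u v = A v u) then
        ∏ u : Fin n, ∏ v : Fin n, if u < v then g u v (A u v) else 1 else 0) =
      ∏ u : Fin n, ∏ v : Fin n, if u < v then g u v true + g u v false else 1 := by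
  classical
  have upper : ∑ A : Adj n, ∏ u : Fin n, ∏ v : Fin n,
      (if u < v then g u v (A u v) else if A u v then 0 else 1) =
      ∏ u : Fin n, ∏ v : Fin n, if u < v then g u v true + g u v false else 1 := by
    have rows : ∀ u : Fin n, (∏ v : Fin n, if u < v then g u v true + g u v false else 1) =
        ∑ r : Fin n → Bool, ∏ v : Fin n,
          (if u < v then g u v (r v) else if r v then 0 else 1) := by
      intro u
      rw [← Fintype.prod_sum
        (fun v (b : Bool) => if u < v then g u v b else if b then (0 : ℝ) else 1)]
      refine Finset.prod_congr rfl fun v _ => ?_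
      by_cases h : u < v <;> simp [h]
    rw [Finset.prod_congr rfl fun u _ => rows u, Fintype.prod_sum]
  rw [← upper, ← Finset.sum_filter, ← Finset.sum_subset
    (Finset.subset_univ (Finset.univ.filter fun A : Adj n => ∀ u v, ¬ u < v → A u v = false))]
  · refine Finset.sum_bij' (fun A _ u v => if u < v then A u v else false)
      (fun A _ u v => if u < v then A u v else A v u) ?_ ?_ ?_ ?_ ?_
    · intro A hA
      simp only [Finset.mem_filter, Finset.mem_univ, true_and]
      intro u v h
      simp [h]
    · intro A hA
      simp only [Finset.mem_filter, Finset.mem_univ, true_and] at hA ⊢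
      refine ⟨fun u => by simpa using hA u u (lt_irrefl u), fun u v => ?_⟩
      rcases lt_trichotomy u v with h | h | h
      · simp [h, not_lt_of_gt h]
      · simp [h]
      · simp [h, not_lt_of_gt h]
    · intro A hA
      simp only [Finset.mem_filter, Finset.mem_univ, true_and] at hA
      funext u v
      rcases lt_trichotomy u v with h | h | h
      · simp [h]
      · simp [h, hA.1]
      · simp [h, not_lt_of_gt h, hA.2 u v]
    · intro A hA
      simp only [Finset.mem_filter, Finset.mem_univ, true_and] at hA
      funext u v
      by_cases h : u < v
      · simp [h]
      · simp [h, hA u v h]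
    · intro A hA
      refine Finset.prod_congr rfl fun u _ => Finset.prod_congr rfl fun v _ => ?_
      by_cases h : u < v <;> simp [h]
  · intro A _ hA
    simp only [Finset.mem_filter, Finset.mem_univ, true_and, not_forall] at hA
    obtain ⟨u, v, h, hA⟩ := hA
    refine Finset.prod_eq_zero (Finset.mem_univ u) (Finset.prod_eq_zero (Finset.mem_univ v) ?_)
    simp [h, hA]

theorem sum_weight {n : ℕ} (P : Matrix (Fin n) (Fin n) ℝ) : ∑ A : Adj n, weight P A = 1 := by
  unfold weight
  rw [sum_symm_prod fun u v b => if b then P u v else 1 - P u v]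
  refine Finset.prod_eq_one fun u _ => Finset.prod_eq_one fun v _ => ?_
  simp

theorem weight_nonneg {n : ℕ} {P : Matrix (Fin n) (Fin n) ℝ}
    (hP : ∀ u v, 0 ≤ P u v ∧ P u v ≤ 1) (A : Adj n) : 0 ≤ weight P A := by
  unfold weight
  split_ifs
  · refine Finset.prod_nonneg fun u _ => Finset.prod_nonneg fun v _ => ?_
    have := hP u v
    split_ifs <;> linarith
  · exact le_rfl

theorem sum_eq_sum_lt {n : ℕ} (f : Fin n → Fin n → ℝ) (hf : ∀ u, f u u = 0) :
    ∑ u, ∑ v, f u v = ∑ u, ∑ v, if u < v then f u v + f v u else 0 := by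
  have split : ∑ u, ∑ v, f u v =
      (∑ u, ∑ v, if u < v then f u v else 0) + ∑ u, ∑ v, if v < u then f u v else 0 := by
    simp only [← Finset.sum_add_distrib]
    refine Finset.sum_congr rfl fun u _ => Finset.sum_congr rfl fun v _ => ?_
    rcases lt_trichotomy u v with h | h | h
    · simp [h, not_lt_of_gt h]
    · simp [h, hf]
    · simp [h, not_lt_of_gt h]
  rw [split, Finset.sum_comm (f := fun u v => if v < u then f u v else 0)]
  simp only [← Finset.sum_add_distrib]
  refine Finset.sum_congr rfl fun u _ => Finset.sum_congr rfl fun v _ => ?_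
  by_cases h : u < v <;> simp [h]

/-- Exponential moment of a weighted sum of degrees, in factorized form. -/
theorem sum_weight_mul_exp {n : ℕ} (P : Matrix (Fin n) (Fin n) ℝ) (s : Fin n → ℝ) :
    ∑ A : Adj n, weight P A * Real.exp (∑ u, s u * degree A u) =
      ∏ u : Fin n, ∏ v : Fin n,
        if u < v then P u v * Real.exp (s u + s v) + (1 - P u v) else 1 := by
  have key := sum_symm_prod
    fun u v b => if b then P u v * Real.exp (s u + s v) else 1 - P u v
  simp only [if_true, Bool.false_eq_true, if_false] at key
  rw [← key]
  refine Finset.sum_congr rfl fun A _ => ?_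
  unfold weight
  split_ifs with hA
  · have expo : ∑ u, s u * degree A u =
        ∑ u, ∑ v, if u < v then (s u + s v) * aVal A u v else 0 := by
      simp only [degree, Finset.mul_sum]
      rw [sum_eq_sum_lt _ fun u => by simp [aVal, hA.1]]
      refine Finset.sum_congr rfl fun u _ => Finset.sum_congr rfl fun v _ => ?_
      have : aVal A v u = aVal A u v := by simp [aVal, hA.2 v u]
      rw [this, add_mul]
    rw [expo]
    simp only [Real.exp_sum, ← Finset.prod_mul_distrib]
    refine Finset.prod_congr rfl fun u _ => Finset.prod_congr rfl fun v _ => ?_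
    by_cases h : u < v <;> cases hb : A u v <;> simp [h, hb, aVal]
  · simp

theorem exp_sub_one_le_four_mul {c : ℝ} (h : c = 0 ∨ c = 1 ∨ c = 2) :
    Real.exp c - 1 ≤ 4 * c := by
  have e := Real.exp_one_lt_d9
  have e0 := Real.exp_pos 1
  rcases h with rfl | rfl | rfl
  · simp
  · linarith
  · rw [show (2 : ℝ) = 1 + 1 by norm_num, Real.exp_add]
    nlinarith

theorem sum_weight_mul_exp_le {n : ℕ} {P : Matrix (Fin n) (Fin n) ℝ} {p : ℝ}
    (hP : ∀ u v, 0 ≤ P u v ∧ P u v ≤ 1) (hp : ∀ u v, P u v ≤ p) (hp0 : 0 ≤ p)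
    (S : Finset (Fin n)) :
    ∑ A : Adj n, weight P A * Real.exp (∑ u ∈ S, degree A u) ≤
      Real.exp (8 * n * p * S.card) := by
  classical
  set s : Fin n → ℝ := fun u => if u ∈ S then 1 else 0 with hs
  have hsum : ∀ A : Adj n, ∑ u ∈ S, degree A u = ∑ u, s u * degree A u := by
    intro A
    simp [hs]
  have s0 : ∀ u, 0 ≤ s u := by
    intro u
    simp only [hs]
    split_ifs <;> norm_num
  simp only [hsum]
  rw [sum_weight_mul_exp]
  have total : ∑ u : Fin n, ∑ v : Fin n, 4 * p * (s u + s v) = 8 * n * p * S.card := by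
    simp only [← Finset.mul_sum, Finset.sum_add_distrib]
    simp [hs]
    ring
  rw [← total, Real.exp_sum]
  simp only [Real.exp_sum]
  have nonneg : ∀ u v : Fin n,
      0 ≤ if u < v then P u v * Real.exp (s u + s v) + (1 - P u v) else 1 := by
    intro u v
    have h1 := hP u v
    have h2 := mul_nonneg h1.1 (Real.exp_pos (s u + s v)).le
    split_ifs <;> linarith
  refine Finset.prod_le_prod (fun u _ => Finset.prod_nonneg fun v _ => nonneg u v) fun u _ =>
    Finset.prod_le_prod (fun v _ => nonneg u v) fun v _ => ?_
  have hc : 0 ≤ s u + s v := add_nonneg (s0 u) (s0 v)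
  split_ifs with h
  · have hexp : Real.exp (s u + s v) - 1 ≤ 4 * (s u + s v) := by
      refine exp_sub_one_le_four_mul ?_
      simp only [hs]
      split_ifs <;> norm_num
    have h1 := Real.add_one_le_exp (4 * p * (s u + s v))
    have h2 := mul_le_mul_of_nonneg_left hexp (hP u v).1
    have h3 := mul_le_mul_of_nonneg_right (hp u v) (mul_nonneg (by norm_num : (0 : ℝ) ≤ 4) hc)
    linarith
  · exact Real.one_le_exp (by positivity)

theorem choose_le_pow_mul_exp {n m : ℕ} {τ : ℝ} (hτ : 0 < τ) :
    (n.choose m : ℝ) ≤ τ ^ m * Real.exp (n / τ) := by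
  rcases lt_or_ge n m with h | h
  · rw [Nat.choose_eq_zero_of_lt h]
    simpa using by positivity
  have h1 : (τ⁻¹) ^ m * (n.choose m : ℝ) ≤ (τ⁻¹ + 1) ^ n := by
    rw [add_pow]
    refine le_trans (le_of_eq (by simp)) (Finset.single_le_sum
      (f := fun i => (τ⁻¹) ^ i * 1 ^ (n - i) * (n.choose i : ℝ))
      (fun i _ => by positivity) (Finset.mem_range.2 (Nat.lt_succ_of_le h)))
  have h2 : (τ⁻¹ + 1) ^ n ≤ Real.exp (n / τ) := by
    rw [div_eq_mul_inv, Real.exp_nat_mul]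
    exact pow_le_pow_left₀ (by positivity) (Real.add_one_le_exp _) n
  calc (n.choose m : ℝ) = τ ^ m * ((τ⁻¹) ^ m * (n.choose m : ℝ)) := by
        rw [← mul_assoc, ← mul_pow, mul_inv_cancel₀ hτ.ne', one_pow, one_mul]
    _ ≤ τ ^ m * Real.exp (n / τ) := by
        gcongr
        exact h1.trans h2

/-- Union bound over node sets of size `m` combined with the exponential Markov inequality. -/
theorem prob_le_choose_mul_exp {n : ℕ} {P : Matrix (Fin n) (Fin n) ℝ} {p : ℝ}
    (hP : ∀ u v, 0 ≤ P u v ∧ P u v ≤ 1) (hp : ∀ u v, P u v ≤ p) (hp0 : 0 ≤ p)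
    (m : ℕ) (τ : ℝ) :
    prob P {A | m ≤ (Finset.univ.filter fun u => τ ≤ degree A u).card} ≤
      n.choose m * Real.exp (8 * n * p * m - m * τ) := by
  classical
  have pointwise : ∀ A : Adj n,
      Set.indicator {A | m ≤ (Finset.univ.filter fun u => τ ≤ degree A u).card} (weight P) A ≤
      ∑ S ∈ Finset.powersetCard m (Finset.univ : Finset (Fin n)),
        weight P A * Real.exp (∑ u ∈ S, degree A u) * Real.exp (-(m * τ)) := by
    intro A
    have hw := weight_nonneg hP A
    have nonneg : ∀ S ∈ Finset.powersetCard m (Finset.univ : Finset (Fin n)),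
        0 ≤ weight P A * Real.exp (∑ u ∈ S, degree A u) * Real.exp (-(m * τ)) :=
      fun S _ => by positivity
    by_cases hA : A ∈ {A : Adj n | m ≤ (Finset.univ.filter fun u => τ ≤ degree A u).card}
    · rw [Set.indicator_of_mem hA]
      obtain ⟨S, hS, hcard⟩ := Finset.exists_subset_card_eq hA
      refine le_trans ?_ (Finset.single_le_sum nonneg
        (Finset.mem_powersetCard.2 ⟨Finset.subset_univ S, hcard⟩))
      have hsum : (m : ℝ) * τ ≤ ∑ u ∈ S, degree A u := by
        rw [← hcard, ← nsmul_eq_mul]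
        exact Finset.card_nsmul_le_sum _ _ _ fun u hu => (Finset.mem_filter.1 (hS hu)).2
      rw [mul_assoc, ← Real.exp_add]
      exact le_mul_of_one_le_right hw (Real.one_le_exp (by linarith))
    · rw [Set.indicator_of_notMem hA]
      exact Finset.sum_nonneg nonneg
  unfold prob
  refine (Finset.sum_le_sum fun A _ => pointwise A).trans ?_
  rw [Finset.sum_comm]
  refine (Finset.sum_le_card_nsmul _ _ (Real.exp (8 * n * p * m - m * τ)) ?_).trans ?_
  · intro S hS
    rw [← Finset.sum_mul, sub_eq_add_neg, Real.exp_add]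
    have := sum_weight_mul_exp_le hP hp hp0 S
    rw [(Finset.mem_powersetCard.1 hS).2] at this
    gcongr
  · simp [Finset.card_powersetCard]

theorem prob_add_prob_compl {n : ℕ} (P : Matrix (Fin n) (Fin n) ℝ) (S : Set (Adj n)) :
    prob P S + prob P Sᶜ = 1 := by
  unfold prob
  rw [← Finset.sum_add_distrib, ← sum_weight P]
  exact Finset.sum_congr rfl fun A _ => Set.indicator_self_add_compl_apply S (weight P) A

theorem le_pmax {n : ℕ} {P : Matrix (Fin n) (Fin n) ℝ} (hP : ∀ u v, P u v ≤ 1) (u v : Fin n) :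
    P u v ≤ pmax P :=
  le_csSup ⟨1, by rintro x ⟨u, v, rfl⟩; exact hP u v⟩ ⟨u, v, rfl⟩

theorem pmax_nonneg {n : ℕ} {P : Matrix (Fin n) (Fin n) ℝ} (hP : ∀ u v, 0 ≤ P u v) :
    0 ≤ pmax P :=
  Real.sSup_nonneg (by rintro x ⟨u, v, rfl⟩; exact hP u v)

/-- Lemma 8 (few nodes have degree above `τ`). -/
theorem statement_17 :
    ∃ C C' : ℝ, 0 < C ∧ 0 < C' ∧
      ∀ (n : ℕ) (P : Matrix (Fin n) (Fin n) ℝ),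
        (∀ u v, P u v = P v u) → (∀ u v, 0 ≤ P u v ∧ P u v ≤ 1) →
        ∀ τ : ℝ, C * (1 + (n : ℝ) * pmax P) < τ →
        1 - Real.exp (-C' * n) ≤ prob P
          { A | ((Finset.univ.filter fun u => τ ≤ degree A u).card : ℝ) ≤
              (n : ℝ) / τ } := by
  refine ⟨100, 1 / 2, by norm_num, by norm_num, fun n P _ hP τ hτ => ?_⟩
  have hp0 : 0 ≤ pmax P := pmax_nonneg fun u v => (hP u v).1
  have hnp : 0 ≤ (n : ℝ) * pmax P := by positivity
  have hτ100 : 100 < τ := by linarith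
  have hτ0 : 0 < τ := by linarith
  set m : ℕ := ⌊(n : ℝ) / τ⌋₊ + 1 with hm
  have hnm : (n : ℝ) / τ < m := by
    rw [hm]
    push_cast
    exact Nat.lt_floor_add_one _
  have compl : { A : Adj n | ((Finset.univ.filter fun u => τ ≤ degree A u).card : ℝ) ≤
      (n : ℝ) / τ }ᶜ = {A | m ≤ (Finset.univ.filter fun u => τ ≤ degree A u).card} := by
    ext A
    rw [Set.mem_compl_iff, Set.mem_ofPred_eq, Set.mem_ofPred_eq, not_le, hm, Nat.succ_le_iff,
      Nat.floor_lt (by positivity)]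
  have hsum := prob_add_prob_compl P
    { A | ((Finset.univ.filter fun u => τ ≤ degree A u).card : ℝ) ≤ (n : ℝ) / τ }
  rw [compl] at hsum
  have hbound := prob_le_choose_mul_exp hP (le_pmax fun u v => (hP u v).2) hp0 m τ
  have hτexp : τ ≤ Real.exp (τ / 4) := by
    have := Real.quadratic_le_exp_of_nonneg (x := τ / 4) (by positivity)
    nlinarith
  have hchoose : (n.choose m : ℝ) ≤ Real.exp (m * (τ / 4) + m) := by
    refine (choose_le_pow_mul_exp hτ0).trans ?_
    rw [Real.exp_add, Real.exp_nat_mul]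
    gcongr
  have hlast : n.choose m * Real.exp (8 * n * pmax P * m - m * τ) ≤
      Real.exp (-(1 / 2) * n) := by
    refine (mul_le_mul_of_nonneg_right hchoose (Real.exp_pos _).le).trans ?_
    rw [← Real.exp_add, Real.exp_le_exp]
    have hmτ : (n : ℝ) ≤ m * τ := ((div_lt_iff₀ hτ0).1 hnm).le
    have hm0 : (0 : ℝ) ≤ m := by positivity
    have h1 := mul_le_mul_of_nonneg_left hτ.le hm0
    nlinarith
  linarith

end SBM
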